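/- arXiv:1306.6222 — 5 statements merged into one kernel-verified Lean document; each statement's English description precedes it below -/
import Mathlib

section
/- Let $0 < t_1 < \cdots < t_n$ be sampling times. Then the $n \times n$ covariance matrix $\Sigma$ with entries $\Sigma_{ij} = u(t_{\min(i,j)}) \, v(t_{\max(i,j)})$ is positive definite. -/
/-!
Write `G s = ∫ ν in 0..s, exp (-2 B ν) σ² ν`. The matrix has entries
`exp (B (t i)) * exp (B (t j)) * G (t (min i j))`, and `G` is strictly increasing because `σ` is
nonzero almost everywhere. By telescoping, it factors as `A * D * Aᴴ`, where `A` is lower triangular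
with `i`-th row `exp (B (t i))` on and below the diagonal, and `D` is diagonal with the increments
of `G` along `0, t 0, …, t n` (`sum_increments_Iic`). The entries of `D` are positive
(`integral_weight_pos`) and `A` is invertible, so the product is positive definite.
-/

open MeasureTheory Real

/-- A set of full measure is dense, so the continuous nonnegative integrand is positive
somewhere in `[a, b]`. -/
lemma integral_weight_pos (B σ : ℝ → ℝ) (hB : Continuous B) (hσ : Continuous σ)
    (hσpos : ∀ᵐ s ∂(volume : Measure ℝ), 0 < σ s) {a b : ℝ} (hab : a < b) :
    0 < ∫ ν in a..b, Real.exp (-2 * B ν) * σ ν ^ 2 := by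
  obtain ⟨c, hc, hac, hcb⟩ := (Measure.dense_of_ae hσpos).exists_between hab
  have hc : 0 < σ c := hc
  refine intervalIntegral.integral_pos hab (by fun_prop) (fun x _ => by positivity)
    ⟨c, ⟨hac.le, hcb.le⟩, by positivity⟩

/-- Telescoping: the increments of `g`, starting from the value `0`, sum to `g`. -/
lemma sum_increments_Iic (n : ℕ) (g : Fin (n + 1) → ℝ) (m : Fin (n + 1)) :
    ∑ k ∈ Finset.Iic m,
      (g k - (Fin.cons 0 (fun i : Fin n => g i.castSucc) : Fin (n + 1) → ℝ) k) = g m := by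
  induction m using Fin.induction with
  | zero =>
    have h : Finset.Iic (0 : Fin (n + 1)) = {0} := by
      ext k; simp
    simp [h]
  | succ i ih =>
    have h : Finset.Iic i.succ = insert i.succ (Finset.Iic i.castSucc) := by
      ext k
      simp only [Finset.mem_Iic, Finset.mem_insert, Fin.le_def, Fin.ext_iff, Fin.val_succ,
        Fin.val_castSucc]
      omega
    rw [h, Finset.sum_insert (by simp [Fin.le_def]), ih]
    simp

/-- For sampling times `0 < t 0 < t 1 < ⋯`, the covariance matrix with
entries `Σ_{ij} = u(t_{min(i,j)}) * v(t_{max(i,j)})`, where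
`u(t) = exp (B t) * ∫_0^t exp (-2 B ν) σ² ν dν` and `v(t) = exp (B t)`,
is positive definite. -/
theorem stmt_0 (n : ℕ) (B σ : ℝ → ℝ) (hB : Continuous B) (hσ : Continuous σ)
    (hσpos : ∀ᵐ s ∂(volume : Measure ℝ), 0 < σ s)
    (t : Fin (n + 1) → ℝ) (ht0 : 0 < t 0) (htmono : StrictMono t) :
    (Matrix.of fun i j : Fin (n + 1) =>
      (Real.exp (B (min (t i) (t j))) *
        ∫ ν in (0:ℝ)..(min (t i) (t j)), Real.exp (-2 * B ν) * σ ν ^ 2) *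
      Real.exp (B (max (t i) (t j)))).PosDef := by
  set G : ℝ → ℝ := fun s => ∫ ν in (0:ℝ)..s, Real.exp (-2 * B ν) * σ ν ^ 2 with hG
  have hint : ∀ a b : ℝ,
      IntervalIntegrable (fun ν => Real.exp (-2 * B ν) * σ ν ^ 2) volume a b :=
    fun a b => Continuous.intervalIntegrable (by fun_prop) a b
  set d : Fin (n + 1) → ℝ := fun k =>
    G (t k) - (Fin.cons 0 (fun i : Fin n => G (t i.castSucc)) : Fin (n + 1) → ℝ) k with hd
  have hdpos : ∀ k, 0 < d k := by
    intro k
    cases k using Fin.cases with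
    | zero => simpa [hd, hG] using integral_weight_pos B σ hB hσ hσpos ht0
    | succ i =>
      have h := integral_weight_pos B σ hB hσ hσpos (htmono i.castSucc_lt_succ)
      rw [← intervalIntegral.integral_interval_sub_left (hint 0 _) (hint 0 _)] at h
      simpa [hd, hG] using h
  let A : Matrix (Fin (n + 1)) (Fin (n + 1)) ℝ :=
    Matrix.of fun i k => if k ≤ i then Real.exp (B (t i)) else 0
  have hA : IsUnit A := by
    rw [Matrix.isUnit_iff_isUnit_det, Matrix.det_of_isLowerTriangular A]
    · simp [A, Finset.prod_eq_zero_iff]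
    · intro i k hik
      have hik : i < k := hik
      simp [A, hik]
  have hpd : (A * Matrix.diagonal d * A.conjTranspose).PosDef :=
    (Matrix.PosDef.diagonal hdpos).mul_mul_conjTranspose_same
      (Matrix.vecMul_injective_of_isUnit hA)
  convert hpd using 1
  ext i j
  have hsum := sum_increments_Iic n (fun k => G (t k)) (min i j)
  have hfac : (A * Matrix.diagonal d * A.conjTranspose) i j =
      Real.exp (B (t i)) * Real.exp (B (t j)) * G (t (min i j)) := by
    rw [← hsum, Finset.mul_sum, Matrix.mul_apply, ← Finset.sum_subset (Finset.subset_univ _)]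
    · refine Finset.sum_congr rfl fun k hk => ?_
      obtain ⟨hi, hj⟩ := le_min_iff.1 (Finset.mem_Iic.1 hk)
      simp only [Matrix.mul_diagonal, Matrix.conjTranspose_apply, A, Matrix.of_apply, hi, hj,
        if_true, star_trivial, hd]
      ring
    · intro k _ hk
      rw [Finset.mem_Iic, le_min_iff, not_and_or] at hk
      rcases hk with hk | hk <;> simp [A, hk]
  rw [hfac, htmono.monotone.map_min]
  rcases le_total (t i) (t j) with h | h
  · simp only [Matrix.of_apply, min_eq_left h, max_eq_right h, hG]
    ring
  · simp only [Matrix.of_apply, min_eq_right h, max_eq_left h, hG]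
    ring
end

section
/- Let $u_1,\dots,u_n$ and $v_1,\dots,v_n$ be real numbers with $v_i > 0$ for all $i$, $u_1 v_1 > 0$, and the ratios $u_1/v_1 < u_2/v_2 < \cdots < u_n/v_n$ strictly increasing. Then the $n \times n$ matrix $A$ with entries $A_{ij} = u_{\min(i,j)} v_{\max(i,j)}$ is positive definite. -/
/-!
With `r i = u i / v i`, the entries are `A i j = v i * v j * r (min i j)`. Telescoping
`r m = ∑ k ≤ m, d k`, where `d 0 = r 0` and `d (k + 1) = r (k + 1) - r k`, gives the factorization
`A = L D Lᴴ` with `D = diagonal d` and `L i k = v i` for `k ≤ i`, zero otherwise. All `d k` are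
positive, so `D` is positive definite, and `L` is lower triangular with diagonal `v`, hence
invertible; congruence by `L` preserves positive definiteness.
-/

/-- The successive differences of `r`, starting from `r 0` itself. -/
def increments {n : ℕ} (r : Fin (n + 1) → ℝ) : Fin (n + 1) → ℝ :=
  Fin.cases (r 0) fun k => r k.succ - r k.castSucc

lemma sum_increments {n : ℕ} (r : Fin (n + 1) → ℝ) (m : Fin (n + 1)) :
    ∑ k ∈ Finset.Iic m, increments r k = r m := by
  induction m using Fin.induction with
  | zero =>
    have h : Finset.Iic (0 : Fin (n + 1)) = {0} := by
      ext k; simp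
    simp [h, increments]
  | succ i ih =>
    have h : Finset.Iic i.succ = insert i.succ (Finset.Iic i.castSucc) := by
      ext k
      simp only [Finset.mem_Iic, Finset.mem_insert, Fin.le_def, Fin.ext_iff, Fin.val_succ,
        Fin.val_castSucc]
      omega
    rw [h, Finset.sum_insert (by simp [Fin.le_def]), ih]
    simp [increments]

/-- The lower triangular matrix whose `i`-th row is constantly `v i` up to the diagonal. -/
def lowerFactor {n : ℕ} (v : Fin (n + 1) → ℝ) : Matrix (Fin (n + 1)) (Fin (n + 1)) ℝ :=
  Matrix.of fun i k => if k ≤ i then v i else 0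

lemma isUnit_lowerFactor {n : ℕ} {v : Fin (n + 1) → ℝ} (hv : ∀ i, 0 < v i) :
    IsUnit (lowerFactor v) := by
  rw [Matrix.isUnit_iff_isUnit_det, Matrix.det_of_isLowerTriangular]
  · simpa [lowerFactor, Finset.prod_eq_zero_iff] using fun i => (hv i).ne'
  · intro i j hij
    have hij' : i < j := hij
    simp [lowerFactor, hij']

/-- If `v i > 0` for all `i`, `u 0 * v 0 > 0`, and the ratios `u i / v i`
are strictly increasing, then the product-structured matrix with entries
`A_{ij} = u (min i j) * v (max i j)` is positive definite. -/
theorem stmt_1 (n : ℕ) (u v : Fin (n + 1) → ℝ)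
    (hv : ∀ i, 0 < v i) (h1 : 0 < u 0 * v 0)
    (hmono : StrictMono fun i => u i / v i) :
    (Matrix.of fun i j : Fin (n + 1) => u (min i j) * v (max i j)).PosDef := by
  set r : Fin (n + 1) → ℝ := fun i => u i / v i with hr
  have hd : ∀ k, 0 < increments r k := by
    intro k
    cases k using Fin.cases with
    | zero => exact div_pos (pos_of_mul_pos_left h1 (hv 0).le) (hv 0)
    | succ k => exact sub_pos.2 (hmono k.castSucc_lt_succ)
  have hA : (Matrix.of fun i j : Fin (n + 1) => u (min i j) * v (max i j)) =
      lowerFactor v * Matrix.diagonal (increments r) * (lowerFactor v).conjTranspose := by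
    ext i j
    have hsum : (lowerFactor v * Matrix.diagonal (increments r) *
        (lowerFactor v).conjTranspose) i j = v i * v j * r (min i j) := by
      have hI : Finset.Iic (min i j) = Finset.univ.filter fun k => k ≤ i ∧ k ≤ j := by
        ext k; simp
      rw [← sum_increments r, Finset.mul_sum, hI, Finset.sum_filter, Matrix.mul_apply]
      refine Finset.sum_congr rfl fun k _ => ?_
      by_cases hi : k ≤ i <;> by_cases hj : k ≤ j <;>
        simp [lowerFactor, Matrix.mul_diagonal, hi, hj]
      ring
    rw [hsum, Matrix.of_apply, hr]
    have hi := (hv i).ne'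
    have hj := (hv j).ne'
    rcases le_total i j with h | h <;> simp only [h, min_eq_left, max_eq_right, min_eq_right,
      max_eq_left] <;> field_simp
  rw [hA]
  exact (Matrix.PosDef.diagonal hd).mul_mul_conjTranspose_same
    (Matrix.vecMul_injective_iff_isUnit.2 (isUnit_lowerFactor hv))
end

section
/- Let $u_1,\dots,u_n$ and $v_1,\dots,v_n$ be real numbers with $v_i > 0$ for all $i$, $u_1 v_1 > 0$, and $u_1/v_1 < u_2/v_2 < \cdots < u_n/v_n$. Let $A$ be the (positive definite) matrix with $A_{ij} = u_{\min(i,j)} v_{\max(i,j)}$. Then for all vectors $x, y \in \mathbb{R}^n$: $x^{\mathsf{T}} A^{-1} y = \frac{x_1 y_1}{u_1 v_1} + \sum_{i=2}^n \frac{\left(\frac{x_i}{v_i} - \frac{x_{i-1}}{v_{i-1}}\right)\left(\frac{y_i}{v_i} - \frac{y_{i-1}}{v_{i-1}}\right)}{\frac{u_i}{v_i} - \frac{u_{i-1}}{v_{i-1}}}$. -/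
/-!
Write `S x y` for the right-hand side, `r i = u i / v i` and `w i = x i / v i`. For `y = A z` one has
`y i / v i = ∑ j, r (min i j) * v j * z j`, so the consecutive difference of `y / v` at `i` is
`(r (i + 1) - r i) * ∑ j > i, v j * z j`: the denominator of the `i`-th term of `S` cancels.
Exchanging the sums, the coefficient of `v j * z j` in `S x (A z)` is
`w 0 + ∑ i < j, (w (i + 1) - w i)`, which telescopes to `w j = x j / v j`. Hence
`S x (A z) = x ⬝ᵥ z` (`productForm_mulVec`). In particular `A z` determines `z`,
so `A` is invertible, and `z = A⁻¹ y` gives the formula.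
-/

open Finset Matrix

/-- The bilinear form claimed to be that of the inverse of the product-structured matrix. -/
noncomputable def productForm {n : ℕ} (u v x y : Fin (n + 1) → ℝ) : ℝ :=
  x 0 * y 0 / (u 0 * v 0) +
    ∑ i : Fin n,
      ((x i.succ / v i.succ - x i.castSucc / v i.castSucc) *
        (y i.succ / v i.succ - y i.castSucc / v i.castSucc)) /
      (u i.succ / v i.succ - u i.castSucc / v i.castSucc)

lemma telescope_fin {n : ℕ} (f : Fin (n + 1) → ℝ) (j : Fin (n + 1)) :
    f 0 + ∑ i : Fin n, (if i.castSucc < j then f i.succ - f i.castSucc else 0) = f j := by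
  induction j using Fin.induction with
  | zero => simp
  | succ j ih =>
    have h : ∀ i : Fin n, (if i.castSucc < j.succ then f i.succ - f i.castSucc else 0) =
        (if i.castSucc < j.castSucc then f i.succ - f i.castSucc else 0) +
          (if i = j then f i.succ - f i.castSucc else 0) := by
      intro i
      simp only [Fin.lt_def, Fin.ext_iff, Fin.val_castSucc, Fin.val_succ]
      rcases lt_trichotomy i.val j.val with h | h | h
      · simp [h, h.ne, Nat.lt_succ_of_lt h]
      · simp [h]
      · have h' : ¬ i.val < j.val + 1 := by omega
        simp [h', h.ne', h.not_gt]
    rw [Finset.sum_congr rfl fun i _ => h i, Finset.sum_add_distrib, ← add_assoc, ih]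
    simp

/-- After division by `v i`, the entries of `A` depend only on the ratio `u / v` at `min i j`. -/
lemma entry_div {n : ℕ} (u v : Fin (n + 1) → ℝ) (hv : ∀ i, 0 < v i) (i j : Fin (n + 1)) :
    u (min i j) * v (max i j) / v i = u (min i j) / v (min i j) * v j := by
  have hi := (hv i).ne'
  have hj := (hv j).ne'
  rcases le_total i j with h | h
  · simp only [min_eq_left h, max_eq_right h]; field_simp
  · simp only [min_eq_right h, max_eq_left h]; field_simp

lemma diff_mulVec {n : ℕ} (u v z : Fin (n + 1) → ℝ) (hv : ∀ i, 0 < v i) (i : Fin n) :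
    ((Matrix.of fun i j => u (min i j) * v (max i j)) *ᵥ z) i.succ / v i.succ -
      ((Matrix.of fun i j => u (min i j) * v (max i j)) *ᵥ z) i.castSucc / v i.castSucc =
    (u i.succ / v i.succ - u i.castSucc / v i.castSucc) *
      ∑ j, if i.castSucc < j then v j * z j else 0 := by
  simp only [Matrix.mulVec, dotProduct, Matrix.of_apply, Finset.sum_div, Finset.mul_sum,
    ← Finset.sum_sub_distrib]
  refine Finset.sum_congr rfl fun j _ => ?_
  rw [mul_div_right_comm _ (z j) (v i.succ), mul_div_right_comm _ (z j) (v i.castSucc),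
    entry_div u v hv, entry_div u v hv]
  split_ifs with h
  · rw [min_eq_left h.le, min_eq_left (Fin.castSucc_lt_iff_succ_le.mp h)]
    ring
  · have h' : j ≤ i.castSucc := not_lt.mp h
    rw [min_eq_right h', min_eq_right (h'.trans (Fin.castSucc_lt_succ).le)]
    ring

lemma productForm_mulVec {n : ℕ} (u v : Fin (n + 1) → ℝ)
    (hv : ∀ i, 0 < v i) (h1 : 0 < u 0 * v 0)
    (hmono : StrictMono fun i => u i / v i) (x z : Fin (n + 1) → ℝ) :
    productForm u v x ((Matrix.of fun i j => u (min i j) * v (max i j)) *ᵥ z) = x ⬝ᵥ z := by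
  have hu0 : u 0 ≠ 0 := left_ne_zero_of_mul h1.ne'
  have hv0 := (hv 0).ne'
  have hfirst : x 0 * ((Matrix.of fun i j => u (min i j) * v (max i j)) *ᵥ z) 0 / (u 0 * v 0) =
      ∑ j, v j * z j * (x 0 / v 0) := by
    simp only [Matrix.mulVec, dotProduct, Matrix.of_apply, Finset.sum_div, Finset.mul_sum]
    refine Finset.sum_congr rfl fun j _ => ?_
    rw [min_eq_left (Fin.zero_le j), max_eq_right (Fin.zero_le j)]
    field_simp
  have hterm : ∀ i : Fin n,
      ((x i.succ / v i.succ - x i.castSucc / v i.castSucc) *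
        (((Matrix.of fun i j => u (min i j) * v (max i j)) *ᵥ z) i.succ / v i.succ -
          ((Matrix.of fun i j => u (min i j) * v (max i j)) *ᵥ z) i.castSucc / v i.castSucc)) /
        (u i.succ / v i.succ - u i.castSucc / v i.castSucc) =
      ∑ j, v j * z j *
        (if i.castSucc < j then x i.succ / v i.succ - x i.castSucc / v i.castSucc else 0) := by
    intro i
    have hd : u i.succ / v i.succ - u i.castSucc / v i.castSucc ≠ 0 :=
      (sub_pos.mpr (hmono (Fin.castSucc_lt_succ (i := i)))).ne'
    rw [diff_mulVec u v z hv, mul_left_comm, mul_div_cancel_left₀ _ hd, Finset.mul_sum]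
    refine Finset.sum_congr rfl fun j _ => ?_
    split_ifs <;> ring
  rw [productForm, hfirst, Finset.sum_congr rfl fun i _ => hterm i, Finset.sum_comm,
    ← Finset.sum_add_distrib, dotProduct]
  refine Finset.sum_congr rfl fun j _ => ?_
  rw [← Finset.mul_sum, ← mul_add, telescope_fin (fun i => x i / v i) j]
  have := (hv j).ne'
  field_simp

/-- Harman–Štuľajter formula: for the product-structured matrix
`A_{ij} = u (min i j) * v (max i j)` with `v i > 0`, `u 0 * v 0 > 0` and strictly
increasing ratios `u i / v i`, the quadratic form of the inverse satisfies
`xᵀ A⁻¹ y = x 0 * y 0 / (u 0 * v 0) + ∑ i, ((x_{i+1}/v_{i+1} - x_i/v_i)(y_{i+1}/v_{i+1} - y_i/v_i)) / (u_{i+1}/v_{i+1} - u_i/v_i)`. -/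
theorem stmt_2 (n : ℕ) (u v : Fin (n + 1) → ℝ)
    (hv : ∀ i, 0 < v i) (h1 : 0 < u 0 * v 0)
    (hmono : StrictMono fun i => u i / v i)
    (A : Matrix (Fin (n + 1)) (Fin (n + 1)) ℝ)
    (hA : A = Matrix.of fun i j => u (min i j) * v (max i j))
    (x y : Fin (n + 1) → ℝ) :
    x ⬝ᵥ (A⁻¹ *ᵥ y) =
      x 0 * y 0 / (u 0 * v 0) +
      ∑ i : Fin n,
        ((x i.succ / v i.succ - x i.castSucc / v i.castSucc) *
          (y i.succ / v i.succ - y i.castSucc / v i.castSucc)) /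
        (u i.succ / v i.succ - u i.castSucc / v i.castSucc) := by
  have key := productForm_mulVec u v hv h1 hmono
  rw [← hA] at key
  have hinj : Function.Injective A.mulVec := by
    intro a b hab
    refine dotProduct_eq _ _ fun w => ?_
    rw [dotProduct_comm a, dotProduct_comm b, ← key w a, ← key w b]
    exact congrArg _ hab
  have hunit : IsUnit A.det :=
    (Matrix.isUnit_iff_isUnit_det A).mp (Matrix.mulVec_injective_iff_isUnit.mp hinj)
  rw [← key x (A⁻¹ *ᵥ y), Matrix.mulVec_mulVec, Matrix.mul_nonsing_inv A hunit,
    Matrix.one_mulVec, productForm]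
end

section
/- Let $\theta_2 > 0$ and $\theta_3 > 0$ with $\theta_2 \ne \theta_3$. The function $\mathscr{I}(t) = \frac{\theta_2 - \theta_3}{e^{-\theta_3 t} - e^{-\theta_2 t}}$ is convex on $(0,\infty)$ and attains its minimum over $(0,\infty)$ uniquely at $t_{\min} = \frac{\ln \theta_2 - \ln \theta_3}{\theta_2 - \theta_3}$. -/
/-!
The quotient is symmetric in `θ₂, θ₃`, so let `a = θ₂ > b = θ₃` and put
`g t = exp (-b t) - exp (-a t)`, which is positive for `t > 0`.

*Convexity.* Factoring `g t = exp (-b t) * (1 - exp (-(a - b) t))`, the second factor is concave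
and positive, so its logarithm is concave; hence `g` is log-concave, and `1 / g = exp (-log g)`
is convex as the exponential of a convex function.

*Minimum.* At `t_min` one has `b * exp (-b t_min) = a * exp (-a t_min)`. With
`z = exp (-b (t - t_min))` and `p = a / b > 1`, the inequality `g t < g t_min` becomes
`z - z ^ p / p < 1 - 1 / p`, which is the strict Bernoulli inequality `1 + p (z - 1) < z ^ p`,
valid for `z ≠ 1`.
-/

lemma gap_pos {a b t : ℝ} (hab : b < a) (ht : 0 < t) :
    0 < Real.exp (-b * t) - Real.exp (-a * t) := by
  have : Real.exp (-a * t) < Real.exp (-b * t) := Real.exp_lt_exp.2 (by nlinarith)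
  linarith

lemma one_sub_exp_pos {c t : ℝ} (hc : 0 < c) (ht : 0 < t) : 0 < 1 - Real.exp (-c * t) := by
  have : Real.exp (-c * t) < 1 := Real.exp_lt_one_iff.2 (by nlinarith [mul_pos hc ht])
  linarith

lemma concaveOn_log_one_sub_exp {c : ℝ} (hc : 0 < c) :
    ConcaveOn ℝ (Set.Ioi (0:ℝ)) fun t => Real.log (1 - Real.exp (-c * t)) := by
  refine ⟨convex_Ioi 0, fun s hs t ht p q hp hq hpq => ?_⟩
  have hs' := one_sub_exp_pos hc hs
  have ht' := one_sub_exp_pos hc ht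
  have hlog := strictConcaveOn_log_Ioi.concaveOn.2 (Set.mem_Ioi.2 hs') (Set.mem_Ioi.2 ht') hp hq hpq
  have hexp := convexOn_exp.2 (Set.mem_univ (-c * s)) (Set.mem_univ (-c * t)) hp hq hpq
  have hpos := (convex_Ioi (0:ℝ)) (Set.mem_Ioi.2 hs') (Set.mem_Ioi.2 ht') hp hq hpq
  simp only [smul_eq_mul, Set.mem_Ioi] at *
  refine hlog.trans (Real.log_le_log hpos ?_)
  have e : -c * (p * s + q * t) = p * (-c * s) + q * (-c * t) := by ring
  rw [e]
  nlinarith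

lemma convexOn_inv_gap {a b : ℝ} (hab : b < a) :
    ConvexOn ℝ (Set.Ioi (0:ℝ)) fun t => (Real.exp (-b * t) - Real.exp (-a * t))⁻¹ := by
  have hc : 0 < a - b := sub_pos.2 hab
  have key : ∀ t ∈ Set.Ioi (0:ℝ), (Real.exp (-b * t) - Real.exp (-a * t))⁻¹
      = Real.exp (b * t - Real.log (1 - Real.exp (-(a - b) * t))) := by
    intro t ht
    rw [Real.exp_sub, Real.exp_log (one_sub_exp_pos hc ht), inv_eq_one_div,
      div_eq_div_iff (gap_pos hab ht).ne' (one_sub_exp_pos hc ht).ne', one_mul, mul_sub,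
      ← Real.exp_add, ← Real.exp_add]
    have e1 : b * t + -b * t = 0 := by ring
    have e2 : b * t + -a * t = -(a - b) * t := by ring
    rw [e1, e2, Real.exp_zero]
  refine ⟨convex_Ioi 0, fun s hs t ht p q hp hq hpq => ?_⟩
  have hm := (convex_Ioi (0:ℝ)) hs ht hp hq hpq
  have hlog := (concaveOn_log_one_sub_exp hc).2 hs ht hp hq hpq
  have hexp := convexOn_exp.2 (Set.mem_univ (b * s - Real.log (1 - Real.exp (-(a - b) * s))))
    (Set.mem_univ (b * t - Real.log (1 - Real.exp (-(a - b) * t)))) hp hq hpq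
  beta_reduce
  rw [key s hs, key t ht, key _ hm]
  refine le_trans (Real.exp_le_exp.2 ?_) hexp
  simp only [smul_eq_mul] at *
  linarith

/-- The critical point of the gap is its strict global maximum: the hypothesis `h₀` says that the
derivative of the gap vanishes at `t₀`. -/
lemma gap_lt {a b t t₀ : ℝ} (hb : 0 < b) (hab : b < a)
    (h₀ : b * Real.exp (-b * t₀) = a * Real.exp (-a * t₀)) (hne : t ≠ t₀) :
    Real.exp (-b * t) - Real.exp (-a * t) < Real.exp (-b * t₀) - Real.exp (-a * t₀) := by
  set z := Real.exp (-b * (t - t₀)) with hz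
  have hz1 : z - 1 ≠ 0 := by
    rw [sub_ne_zero, hz, Ne, Real.exp_eq_one_iff]
    exact mul_ne_zero (neg_ne_zero.2 hb.ne') (sub_ne_zero.2 hne)
  have hB := one_add_mul_self_lt_rpow_one_add (s := z - 1)
    (by linarith [Real.exp_pos (-b * (t - t₀))]) hz1 ((one_lt_div hb).2 hab)
  have hzp : (1 + (z - 1)) ^ (a / b) = Real.exp (-a * (t - t₀)) := by
    rw [add_sub_cancel, hz, ← Real.exp_mul]
    congr 1
    field_simp
  rw [hzp] at hB
  have e1 : Real.exp (-b * t) = Real.exp (-b * t₀) * z := by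
    rw [hz, ← Real.exp_add]; congr 1; ring
  have e2 : Real.exp (-a * t) = Real.exp (-a * t₀) * Real.exp (-a * (t - t₀)) := by
    rw [← Real.exp_add]; congr 1; ring
  have h₀' : Real.exp (-b * t₀) = a / b * Real.exp (-a * t₀) := by
    rw [div_mul_eq_mul_div, eq_div_iff hb.ne', ← h₀, mul_comm]
  rw [e1, e2, h₀']
  nlinarith [mul_lt_mul_of_pos_left hB (Real.exp_pos (-a * t₀))]

/-- The case `b < a` of the theorem; the general one follows by symmetry. -/
lemma fisher_of_lt {a b : ℝ} (hb : 0 < b) (hab : b < a) :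
    ConvexOn ℝ (Set.Ioi (0:ℝ)) (fun t => (a - b) / (Real.exp (-b * t) - Real.exp (-a * t))) ∧
      0 < (Real.log a - Real.log b) / (a - b) ∧
      ∀ t ∈ Set.Ioi (0:ℝ), t ≠ (Real.log a - Real.log b) / (a - b) →
        (a - b) / (Real.exp (-b * ((Real.log a - Real.log b) / (a - b)))
          - Real.exp (-a * ((Real.log a - Real.log b) / (a - b)))) <
        (a - b) / (Real.exp (-b * t) - Real.exp (-a * t)) := by
  have hc : 0 < a - b := sub_pos.2 hab
  have ha : 0 < a := hb.trans hab
  refine ⟨?_, div_pos (sub_pos.2 (Real.log_lt_log hb hab)) hc, fun t ht hne => ?_⟩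
  · simpa [div_eq_mul_inv] using (convexOn_inv_gap hab).smul hc.le
  · refine div_lt_div_of_pos_left hc (gap_pos hab ht) (gap_lt hb hab ?_ hne)
    set t₀ := (Real.log a - Real.log b) / (a - b) with h
    have h' : t₀ * (a - b) = Real.log a - Real.log b := by rw [h]; field_simp
    have e : Real.exp (Real.log b + -b * t₀) = Real.exp (Real.log a + -a * t₀) := by
      congr 1
      linarith
    rwa [Real.exp_add, Real.exp_add, Real.exp_log hb, Real.exp_log ha] at e

/-- for `θ₂, θ₃ > 0`, `θ₂ ≠ θ₃`, the Fisher information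
`𝓘 t = (θ₂ - θ₃) / (exp (-θ₃ t) - exp (-θ₂ t))` is convex on `(0, ∞)` and attains its
minimum over `(0, ∞)` uniquely at `t_min = (log θ₂ - log θ₃) / (θ₂ - θ₃)`. -/
theorem stmt_11 (θ₂ θ₃ : ℝ) (h₂ : 0 < θ₂) (h₃ : 0 < θ₃) (hne : θ₂ ≠ θ₃)
    (I : ℝ → ℝ)
    (hI : I = fun t => (θ₂ - θ₃) / (Real.exp (-θ₃ * t) - Real.exp (-θ₂ * t)))
    (tmin : ℝ) (htmin : tmin = (Real.log θ₂ - Real.log θ₃) / (θ₂ - θ₃)) :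
    ConvexOn ℝ (Set.Ioi (0:ℝ)) I ∧ tmin ∈ Set.Ioi (0:ℝ) ∧
      ∀ t ∈ Set.Ioi (0:ℝ), t ≠ tmin → I tmin < I t := by
  rcases lt_or_gt_of_ne hne with h | h
  · have hI' : I = fun t => (θ₃ - θ₂) / (Real.exp (-θ₂ * t) - Real.exp (-θ₃ * t)) := by
      rw [hI]; funext t
      rw [← neg_div_neg_eq, neg_sub, neg_sub]
    have ht' : tmin = (Real.log θ₃ - Real.log θ₂) / (θ₃ - θ₂) := by
      rw [htmin, ← neg_div_neg_eq, neg_sub, neg_sub]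
    rw [hI', ht']
    exact fisher_of_lt h₂ h
  · rw [hI, htmin]
    exact fisher_of_lt h₃ h
end

section
/- Let $u_1,\dots,u_n$ and $v_1,\dots,v_n$ be real numbers with $v_i > 0$ for all $i$, $u_1 v_1 > 0$, and $u_1/v_1 < u_2/v_2 < \cdots < u_n/v_n$, and let $A$ be the matrix with $A_{ij} = u_{\min(i,j)} v_{\max(i,j)}$. If $x \in \mathbb{R}^n$ is proportional to $(v_1,\dots,v_n)^{\mathsf{T}}$, say $x_i = \alpha v_i$ for all $i$, then $x^{\mathsf{T}} A^{-1} x = \alpha^2 \frac{v_1}{u_1}$. -/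
/-!
Since `min i 0 = 0` and `max i 0 = i`, the first column of `A` is `u 0 • v`. Hence, once `A` is
invertible, `A⁻¹ (α • v) = (α / u 0) • e₀`, and pairing with `α • v` gives `α² v 0 / u 0`.

Invertibility is proved by showing that the kernel is trivial (`mulVec_eq_zero_imp`). If `A y = 0`,
then the combination `v i * (row i+1) - v (i+1) * (row i)` annihilates all entries `j ≤ i` and
equals `(u (i+1) * v i - u i * v (i+1)) * v j` for `j > i`; the constant is positive because the
ratios `u / v` increase. Together with row `0`, this makes all tail sums `∑_{j ≥ i} v j * y j`
vanish, so `y = 0`.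
-/

open Matrix

theorem mulVec_eq_zero_imp (n : ℕ) (u v : Fin (n + 1) → ℝ)
    (hv : ∀ i, 0 < v i) (hu : u 0 ≠ 0)
    (hmono : StrictMono fun i => u i / v i) (y : Fin (n + 1) → ℝ)
    (hy : ∀ i, ∑ j, u (min i j) * v (max i j) * y j = 0) : y = 0 := by
  have tail : ∀ i, ∑ j, (if i ≤ j then v j * y j else 0) = 0 := by
    intro i
    induction i using Fin.cases with
    | zero =>
      have h := hy 0
      simp only [Fin.zero_le, min_eq_left, max_eq_right, mul_assoc, ← Finset.mul_sum] at h
      simpa using (mul_eq_zero.mp h).resolve_left hu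
    | succ i =>
      have hlt : u i.castSucc / v i.castSucc < u i.succ / v i.succ :=
        hmono Fin.castSucc_lt_succ
      rw [div_lt_div_iff₀ (hv _) (hv _)] at hlt
      have key : (u i.succ * v i.castSucc - u i.castSucc * v i.succ) *
          ∑ j, (if i.succ ≤ j then v j * y j else 0) =
          v i.castSucc * (∑ j, u (min i.succ j) * v (max i.succ j) * y j) -
          v i.succ * (∑ j, u (min i.castSucc j) * v (max i.castSucc j) * y j) := by
        rw [Finset.mul_sum, Finset.mul_sum, Finset.mul_sum, ← Finset.sum_sub_distrib]
        refine Finset.sum_congr rfl fun j _ => ?_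
        by_cases h : i.succ ≤ j
        · have h' : i.castSucc ≤ j := Fin.castSucc_lt_succ.le.trans h
          rw [if_pos h, min_eq_left h, max_eq_right h, min_eq_left h', max_eq_right h']
          ring
        · have h2 : j ≤ i.succ := (not_le.mp h).le
          have h' : j ≤ i.castSucc := by
            have := not_le.mp h
            simp only [Fin.lt_def, Fin.le_def, Fin.val_succ, Fin.val_castSucc] at this ⊢
            omega
          rw [if_neg h, min_eq_right h2, max_eq_left h2, min_eq_right h', max_eq_left h']
          ring
      rw [hy, hy, mul_zero, mul_zero, sub_zero] at key
      exact (mul_eq_zero.mp key).resolve_left (by linarith)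
  funext i
  induction i using WellFoundedGT.induction with
  | ind i ih =>
    have h := tail i
    -- All entries beyond `i` vanish, so the tail sum at `i` is its first term.
    rw [Finset.sum_eq_single i] at h
    · simpa [(hv i).ne'] using h
    · intro j _ hji
      split_ifs with hij
      · rw [ih j (lt_of_le_of_ne hij hji.symm)]
        simp
      · rfl
    · simp

/-- for the product-structured matrix `A_{ij} = u (min i j) * v (max i j)`
with `v i > 0`, `u 0 * v 0 > 0` and strictly increasing ratios `u i / v i`, if
`x = α • v` then `xᵀ A⁻¹ x = α² * v 0 / u 0`. -/
theorem stmt_18 (n : ℕ) (u v : Fin (n + 1) → ℝ)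
    (hv : ∀ i, 0 < v i) (h1 : 0 < u 0 * v 0)
    (hmono : StrictMono fun i => u i / v i)
    (A : Matrix (Fin (n + 1)) (Fin (n + 1)) ℝ)
    (hA : A = Matrix.of fun i j => u (min i j) * v (max i j))
    (α : ℝ) (x : Fin (n + 1) → ℝ) (hx : ∀ i, x i = α * v i) :
    x ⬝ᵥ (A⁻¹ *ᵥ x) = α ^ 2 * (v 0 / u 0) := by
  have hu : u 0 ≠ 0 := fun h => by simp [h] at h1
  have hdet : IsUnit A.det := by
    rw [isUnit_iff_ne_zero]
    intro h0
    obtain ⟨y, hy0, hy⟩ := Matrix.exists_mulVec_eq_zero_iff.mpr h0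
    refine hy0 (mulVec_eq_zero_imp n u v hv hu hmono y fun i => ?_)
    simpa [hA, Matrix.mulVec, dotProduct] using congrFun hy i
  have hcol : x = A *ᵥ Pi.single 0 (α / u 0) := by
    funext i
    rw [hx, hA]
    simp
    field_simp
  have hinv : A⁻¹ *ᵥ x = Pi.single 0 (α / u 0) := by
    rw [hcol, Matrix.mulVec_mulVec, Matrix.nonsing_inv_mul A hdet, Matrix.one_mulVec]
  rw [hinv, dotProduct_single, hx]
  ring
end
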